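/- arXiv:1403.1218 — 3 statements merged into one kernel-verified Lean document; each statement's English description precedes it below -/
import Mathlib

section
/- Suppose n is prime. Then for every F_q-subspace U of F_{q^n} with {0} ≠ U ≠ F_{q^n}, one has Stab(U) = F_q^* and |orb(U)| = (q^n − 1)/(q − 1). -/
/-!
The multipliers `x` with `U x ⊆ U` form an `F`-subalgebra of `K`. Since `[K : F]` is prime, this
subalgebra is `F` or `K` (`Subalgebra.isSimpleOrder_of_finrank_prime`). It is not `K`: a nonzero
`u ∈ U` would give `U ⊇ u K = K`. Hence `Stab(U) = F^*`. The orbit size follows from the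
orbit-stabilizer theorem for `Kˣ` acting on the subspaces of `K`, as `|Kˣ| = q^n - 1` and the
stabilizer has `q - 1` elements.
-/

/-- The subspace `Uγ = {uγ : u ∈ U}` of the `F`-vector space `K`. -/
def mulMap (F K : Type) [Field F] [Field K] [Algebra F K] (γ : K) (U : Submodule F K) :
    Submodule F K :=
  U.map (LinearMap.mulRight F γ)

/-- The stabilizer `Stab(U) = {γ ∈ K^* : Uγ = U}`. -/
def stab (F K : Type) [Field F] [Field K] [Algebra F K] (U : Submodule F K) : Set K :=
  {γ : K | γ ≠ 0 ∧ mulMap F K γ U = U}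

/-- The cyclic orbit code `orb(U) = {Uγ : γ ∈ K^*}`. -/
def orb (F K : Type) [Field F] [Field K] [Algebra F K] (U : Submodule F K) :
    Set (Submodule F K) :=
  {V : Submodule F K | ∃ γ : K, γ ≠ 0 ∧ V = mulMap F K γ U}

open scoped Pointwise

/-- The `F`-subalgebra of all `x ∈ K` with `U x ⊆ U`. -/
def multiplierAlgebra (F K : Type) [Field F] [Field K] [Algebra F K] (U : Submodule F K) :
    Subalgebra F K where
  carrier := {x | ∀ u ∈ U, u * x ∈ U}
  mul_mem' {a b} ha hb u hu := by
    rw [← mul_assoc]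
    exact hb _ (ha u hu)
  add_mem' {a b} ha hb u hu := by
    rw [mul_add]
    exact U.add_mem (ha u hu) (hb u hu)
  algebraMap_mem' c u hu := by
    rw [mul_comm, ← Algebra.smul_def]
    exact U.smul_mem c hu

theorem multiplierAlgebra_eq_bot (F K : Type) [Field F] [Field K] [Algebra F K]
    (hp : (Module.finrank F K).Prime) (U : Submodule F K) (hU0 : U ≠ ⊥) (hUtop : U ≠ ⊤) :
    multiplierAlgebra F K U = ⊥ := by
  have := Subalgebra.isSimpleOrder_of_finrank_prime F K hp
  refine (eq_bot_or_eq_top (multiplierAlgebra F K U)).resolve_right fun h => hUtop ?_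
  obtain ⟨u, hu, hu0⟩ := U.exists_mem_ne_zero_of_ne_bot hU0
  refine eq_top_iff.2 fun y _ => ?_
  have hy : u⁻¹ * y ∈ multiplierAlgebra F K U := h ▸ Algebra.mem_top
  simpa [mul_inv_cancel_left₀ hu0] using hy u hu

theorem stab_eq (F K : Type) [Field F] [Field K] [Algebra F K]
    (hp : (Module.finrank F K).Prime) (U : Submodule F K) (hU0 : U ≠ ⊥) (hUtop : U ≠ ⊤) :
    stab F K U = {γ : K | ∃ c : F, c ≠ 0 ∧ algebraMap F K c = γ} := by
  ext γ
  constructor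
  · rintro ⟨hγ0, hγ⟩
    have hmem : γ ∈ multiplierAlgebra F K U := fun u hu => by
      rw [← hγ]
      exact ⟨u, hu, rfl⟩
    rw [multiplierAlgebra_eq_bot F K hp U hU0 hUtop] at hmem
    obtain ⟨c, rfl⟩ := Algebra.mem_bot.1 hmem
    exact ⟨c, fun hc => hγ0 (by simp [hc]), rfl⟩
  · rintro ⟨c, hc, rfl⟩
    refine ⟨by simpa using hc, le_antisymm ?_ fun u hu => ?_⟩
    · rintro _ ⟨u, hu, rfl⟩
      exact (multiplierAlgebra F K U).algebraMap_mem c u hu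
    · refine ⟨c⁻¹ • u, U.smul_mem _ hu, ?_⟩
      rw [LinearMap.mulRight_apply, mul_comm, ← Algebra.smul_def, smul_inv_smul₀ hc]

/-- `U γ` is the translate of `U` under Mathlib's pointwise action of `Kˣ` on subspaces. -/
theorem mulMap_units (F K : Type) [Field F] [Field K] [Algebra F K] (γ : Kˣ)
    (U : Submodule F K) : mulMap F K γ U = γ • U := by
  ext y
  simp [mulMap, Submodule.mem_smul_pointwise_iff_exists, Units.smul_def,
    mul_comm]

theorem orb_eq_orbit (F K : Type) [Field F] [Field K] [Algebra F K] (U : Submodule F K) :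
    orb F K U = MulAction.orbit Kˣ U := by
  ext V
  constructor
  · rintro ⟨γ, hγ, rfl⟩
    exact ⟨Units.mk0 γ hγ, (mulMap_units F K (Units.mk0 γ hγ) U).symm⟩
  · rintro ⟨γ, rfl⟩
    exact ⟨γ, γ.ne_zero, (mulMap_units F K γ U).symm⟩

theorem stabilizer_eq_range (F K : Type) [Field F] [Field K] [Algebra F K]
    (hp : (Module.finrank F K).Prime) (U : Submodule F K) (hU0 : U ≠ ⊥) (hUtop : U ≠ ⊤) :
    MulAction.stabilizer Kˣ U = (Units.map (algebraMap F K : F →* K)).range := by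
  ext γ
  have h : γ ∈ MulAction.stabilizer Kˣ U ↔ (γ : K) ∈ stab F K U := by
    rw [MulAction.mem_stabilizer_iff, ← mulMap_units]
    exact ⟨fun h => ⟨γ.ne_zero, h⟩, fun h => h.2⟩
  rw [h, stab_eq F K hp U hU0 hUtop]
  constructor
  · rintro ⟨c, hc, hcγ⟩
    exact ⟨Units.mk0 c hc, Units.ext hcγ⟩
  · rintro ⟨c, rfl⟩
    exact ⟨c, c.ne_zero, rfl⟩

/-- If `n` is prime, then for every `F_q`-subspace `U` of `F_{q^n}` with
`{0} ≠ U ≠ F_{q^n}` one has `Stab(U) = F_q^*` and `|orb(U)| = (q^n − 1)/(q − 1)`. -/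
theorem stmt1 (q n : ℕ) (hn : n.Prime) (F K : Type) [Field F] [Field K] [Finite F] [Finite K]
    [Algebra F K] (hq : Nat.card F = q) (hrank : Module.finrank F K = n)
    (U : Submodule F K) (hU0 : U ≠ ⊥) (hUtop : U ≠ ⊤) :
    stab F K U = {γ : K | ∃ c : F, c ≠ 0 ∧ algebraMap F K c = γ} ∧
    Set.ncard (orb F K U) = (q ^ n - 1) / (q - 1) := by
  subst hrank
  refine ⟨stab_eq F K hn U hU0 hUtop, ?_⟩
  have hrange : Nat.card (Units.map (algebraMap F K : F →* K)).range = Nat.card Fˣ :=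
    (Nat.card_congr (MonoidHom.ofInjective
      (Units.map_injective (algebraMap F K).injective)).toEquiv).symm
  have hcard := (MulAction.stabilizer Kˣ U).card_mul_index
  rw [MulAction.index_stabilizer, ← orb_eq_orbit, stabilizer_eq_range F K hn U hU0 hUtop,
    hrange, Nat.card_units, Nat.card_units, Module.natCard_eq_pow_finrank (K := F) (V := K), hq] at hcard
  have hq1 : 1 < q := hq ▸ Finite.one_lt_card
  exact (Nat.div_eq_of_eq_mul_right (by omega) hcard.symm).symm
end

section
/- Let U be an F_q-subspace of F_{q^n} with 1 ∈ U. Then the subfield Stab+(U) = Stab(U) ∪ {0} is the best friend of U: Stab+(U) is a friend of U, and every friend of U is contained in Stab+(U). -/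
/-- A subfield `E` of `K` (containing `F`) is a friend of `U` if `U` is a vector space
over `E`, i.e. `c * u ∈ U` for all `c ∈ E`, `u ∈ U`. -/
def IsFriend (F K : Type) [Field F] [Field K] [Algebra F K] (E : IntermediateField F K)
    (U : Submodule F K) : Prop :=
  ∀ c ∈ E, ∀ u ∈ U, c * u ∈ U

/-- An element of `K` lies in `Stab(U) ∪ {0}` exactly when multiplication by it maps `U` into
itself; equality `Uγ = U` then follows by comparing dimensions. -/
theorem mem_stab_union_zero_iff (F K : Type) [Field F] [Field K] [Finite K] [Algebra F K]
    (U : Submodule F K) (γ : K) :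
    γ ∈ stab F K U ∪ {0} ↔ ∀ u ∈ U, γ * u ∈ U := by
  constructor
  · rintro (⟨-, h⟩ | h) u hu
    · rw [← h]
      exact ⟨u, hu, mul_comm u γ⟩
    · rw [Set.mem_singleton_iff.mp h, zero_mul]
      exact U.zero_mem
  · intro h
    by_cases h0 : γ = 0
    · exact Or.inr h0
    · refine Or.inl ⟨h0, Submodule.eq_of_le_of_finrank_eq ?_ ?_⟩
      · rintro _ ⟨u, hu, rfl⟩
        simpa [mul_comm] using h u hu
      · exact (Submodule.equivMapOfInjective (LinearMap.mulRight F γ)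
          (mul_left_injective₀ h0) U).finrank_eq.symm

/-- The set `{γ : Uγ ⊆ U}` as an intermediate field. -/
def idealizerField (F K : Type) [Field F] [Field K] [Finite K] [Algebra F K]
    (U : Submodule F K) : IntermediateField F K where
  carrier := {γ : K | ∀ u ∈ U, γ * u ∈ U}
  mul_mem' {a b} ha hb u hu := by
    rw [mul_assoc]
    exact ha _ (hb u hu)
  add_mem' {a b} ha hb u hu := by
    rw [add_mul]
    exact U.add_mem (ha u hu) (hb u hu)
  algebraMap_mem' r u hu := by
    rw [← Algebra.smul_def]
    exact U.smul_mem r hu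
  inv_mem' a ha u hu := by
    rcases (mem_stab_union_zero_iff F K U a).mpr ha with ⟨h0, h⟩ | h
    · -- Since `Ua = U`, write `u = va` with `v ∈ U`; then `a⁻¹u = v`.
      rw [← h] at hu
      obtain ⟨v, hv, rfl⟩ := hu
      simpa [mul_comm v a, inv_mul_cancel_left₀ h0] using hv
    · rw [Set.mem_singleton_iff.mp h, inv_zero, zero_mul]
      exact U.zero_mem

/-- Let `U` be an `F_q`-subspace of `F_{q^n}` with `1 ∈ U`.  Then the
subfield `Stab+(U) = Stab(U) ∪ {0}` is the best friend of `U`: it is a friend of `U`,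
and every friend of `U` is contained in it. -/
theorem stmt6 (q n : ℕ) (F K : Type) [Field F] [Field K] [Finite F] [Finite K] [Algebra F K]
    (hq : Nat.card F = q) (hn : Module.finrank F K = n)
    (U : Submodule F K) (hU : (1 : K) ∈ U) :
    ∃ E : IntermediateField F K,
      (E : Set K) = stab F K U ∪ {0} ∧
      IsFriend F K E U ∧
      ∀ E' : IntermediateField F K, IsFriend F K E' U → E' ≤ E := by
  exact ⟨idealizerField F K U,
    Set.ext fun γ => (mem_stab_union_zero_iff F K U γ).symm,
    fun c hc => hc,
    fun E' hE' c hc => hE' c hc⟩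
end

section
/- Let U be a k-dimensional F_q-subspace of F_{q^n} with 1 ∈ U and U ≠ F_{q^n}, let F_{q^r} be the best friend of U, and set t := k/r. Define s := max{dim_{F_{q^r}}(U ∩ W) : W ∈ orb(U), W ≠ U}. Then d_S(orb(U)) = 2(k − sr) = 2r(t − s), and consequently 2r ≤ d_S(orb(U)) ≤ 2k. -/
/-- The subspace distance `d_S(V,W) = dim V + dim W − 2 dim (V ∩ W)`. -/
noncomputable def sdist (F : Type) [Field F] {M : Type} [AddCommGroup M] [Module F M]
    (V W : Submodule F M) : ℕ :=
  Module.finrank F ↥V + Module.finrank F ↥W - 2 * Module.finrank F ↥(V ⊓ W)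

/-- The subspace distance of a code: `d_S(C) = min {d_S(V,W) : V,W ∈ C, V ≠ W}`. -/
noncomputable def cdist (F : Type) [Field F] {M : Type} [AddCommGroup M] [Module F M]
    (C : Set (Submodule F M)) : ℕ :=
  sInf {d : ℕ | ∃ V ∈ C, ∃ W ∈ C, V ≠ W ∧ d = sdist F V W}

section Orbit

variable {F K : Type} [Field F] [Field K] [Algebra F K]

lemma mulRight_injective_of_ne_zero {γ : K} (hγ : γ ≠ 0) :
    Function.Injective (LinearMap.mulRight F γ) :=
  fun _ _ h => mul_right_cancel₀ hγ h

lemma mem_mulMap {γ x : K} {U : Submodule F K} : x ∈ mulMap F K γ U ↔ ∃ u ∈ U, u * γ = x := by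
  simp [mulMap, Submodule.mem_map]

lemma finrank_mulMap {γ : K} (hγ : γ ≠ 0) (U : Submodule F K) :
    Module.finrank F ↥(mulMap F K γ U) = Module.finrank F ↥U :=
  (LinearEquiv.finrank_eq
    (Submodule.equivMapOfInjective _ (mulRight_injective_of_ne_zero (F := F) hγ) U)).symm

lemma mulMap_inf {γ : K} (hγ : γ ≠ 0) (U V : Submodule F K) :
    mulMap F K γ (U ⊓ V) = mulMap F K γ U ⊓ mulMap F K γ V :=
  Submodule.map_inf _ (mulRight_injective_of_ne_zero hγ)

lemma mulMap_mulMap (γ δ : K) (U : Submodule F K) :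
    mulMap F K γ (mulMap F K δ U) = mulMap F K (δ * γ) U := by
  ext x
  simp [mem_mulMap, mul_assoc]

lemma mulMap_one (U : Submodule F K) : mulMap F K 1 U = U := by
  ext x
  simp [mem_mulMap]

lemma self_mem_orb (U : Submodule F K) : U ∈ orb F K U :=
  ⟨1, one_ne_zero, (mulMap_one U).symm⟩

lemma finrank_of_mem_orb {U V : Submodule F K} (hV : V ∈ orb F K U) :
    Module.finrank F ↥V = Module.finrank F ↥U := by
  obtain ⟨γ, hγ, rfl⟩ := hV
  exact finrank_mulMap hγ U

/-- Scaling by `γ⁻¹` reduces the intersection of two distinct members `Uγ`, `Uδ` of the orbit to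
an intersection with `U` itself. -/
lemma exists_inter_finrank {U V W : Submodule F K} (hV : V ∈ orb F K U) (hW : W ∈ orb F K U)
    (hVW : V ≠ W) : ∃ W' ∈ orb F K U, W' ≠ U ∧
      Module.finrank F ↥(V ⊓ W) = Module.finrank F ↥(U ⊓ W') := by
  obtain ⟨γ, hγ, rfl⟩ := hV
  obtain ⟨δ, hδ, rfl⟩ := hW
  have h : mulMap F K γ (mulMap F K (δ * γ⁻¹) U) = mulMap F K δ U := by
    rw [mulMap_mulMap, inv_mul_cancel_right₀ hγ]
  refine ⟨mulMap F K (δ * γ⁻¹) U, ⟨_, mul_ne_zero hδ (inv_ne_zero hγ), rfl⟩, ?_, ?_⟩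
  · intro h'
    rw [h'] at h
    exact hVW h
  · rw [← h, ← mulMap_inf hγ, finrank_mulMap hγ]

lemma exists_mem_orb_ne {U : Submodule F K} (hU1 : (1 : K) ∈ U) (hU : U ≠ ⊤) :
    ∃ W ∈ orb F K U, W ≠ U := by
  obtain ⟨γ, hγ⟩ : ∃ γ, γ ∉ U := by
    by_contra! h
    exact hU (eq_top_iff.2 fun x _ => h x)
  refine ⟨mulMap F K γ U, ⟨γ, ?_, rfl⟩, ?_⟩
  · rintro rfl
    exact hγ U.zero_mem
  · intro h
    exact hγ (h ▸ mem_mulMap.2 ⟨1, hU1, one_mul γ⟩)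

lemma IsFriend.of_mem_orb {E : IntermediateField F K} {U V : Submodule F K}
    (h : IsFriend F K E U) (hV : V ∈ orb F K U) : IsFriend F K E V := by
  obtain ⟨γ, -, rfl⟩ := hV
  intro c hc x hx
  obtain ⟨u, hu, rfl⟩ := mem_mulMap.1 hx
  exact mem_mulMap.2 ⟨c * u, h c hc u hu, mul_assoc c u γ⟩

lemma IsFriend.inf {E : IntermediateField F K} {U V : Submodule F K}
    (hU : IsFriend F K E U) (hV : IsFriend F K E V) : IsFriend F K E (U ⊓ V) :=
  fun c hc u hu => ⟨hU c hc u hu.1, hV c hc u hu.2⟩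

/-- Tower law for the `E`-subspace with the same elements as `U`. -/
lemma IsFriend.dvd_finrank {E : IntermediateField F K} {U : Submodule F K}
    (h : IsFriend F K E U) : Module.finrank F ↥E ∣ Module.finrank F ↥U := by
  let U' : Submodule E K :=
    { carrier := U
      add_mem' := U.add_mem
      zero_mem' := U.zero_mem
      smul_mem' := fun c x hx => h c c.2 x hx }
  have hU' : U = U'.restrictScalars F := by
    ext x
    rfl
  have h1 : Module.finrank F ↥U = Module.finrank F ↥U' := by
    conv_lhs => rw [hU']
    rfl
  rw [h1]
  exact ⟨_, (Module.finrank_mul_finrank F E U').symm⟩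

lemma finrank_inf_lt [FiniteDimensional F K] {U W : Submodule F K}
    (hd : Module.finrank F ↥W = Module.finrank F ↥U) (hW : W ≠ U) :
    Module.finrank F ↥(U ⊓ W) < Module.finrank F ↥U := by
  refine Submodule.finrank_lt_finrank_of_lt (lt_of_le_of_ne inf_le_left fun h => hW ?_)
  exact (Submodule.eq_of_le_of_finrank_eq (inf_eq_left.1 h) hd.symm).symm

end Orbit

/-- Let `U` be a `k`-dimensional `F_q`-subspace of `F_{q^n}` with `1 ∈ U`
and `U ≠ F_{q^n}`, with best friend `F_{q^r}`, and set `t := k/r`.  Let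
`s := max{dim_{F_{q^r}}(U ∩ W) : W ∈ orb(U), W ≠ U}`; since every such intersection is an
`F_{q^r}`-vector space, its `F_{q^r}`-dimension equals its `F_q`-dimension divided by `r`.
Then `d_S(orb(U)) = 2(k − sr) = 2r(t − s)`, and consequently `2r ≤ d_S(orb(U)) ≤ 2k`. -/
theorem stmt8 (q n k r : ℕ) (F K : Type) [Field F] [Field K] [Finite F] [Finite K] [Algebra F K]
    (hq : Nat.card F = q) (hn : Module.finrank F K = n)
    (U : Submodule F K) (hU1 : (1 : K) ∈ U) (hUk : Module.finrank F ↥U = k) (hUtop : U ≠ ⊤)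
    (E : IntermediateField F K) (hEr : Nat.card ↥E = q ^ r)
    (hfriend : IsFriend F K E U)
    (hbest : ∀ E' : IntermediateField F K, IsFriend F K E' U →
      Nat.card ↥E' ≤ Nat.card ↥E)
    (t s : ℕ) (ht : t = k / r)
    (hs : s = sSup {m : ℕ | ∃ W ∈ orb F K U, W ≠ U ∧ m = Module.finrank F ↥(U ⊓ W) / r}) :
    cdist F (orb F K U) = 2 * (k - s * r) ∧
    cdist F (orb F K U) = 2 * r * (t - s) ∧
    2 * r ≤ cdist F (orb F K U) ∧ cdist F (orb F K U) ≤ 2 * k := by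
  have : FiniteDimensional F K := Module.Finite.of_finite
  have hq1 : 1 < q := hq ▸ Finite.one_lt_card
  have hr : Module.finrank F ↥E = r := by
    have h := Module.natCard_eq_pow_finrank (K := F) (V := E)
    rw [hEr, hq] at h
    exact (Nat.pow_right_injective hq1 h).symm
  have hr0 : 0 < r := hr ▸ Module.finrank_pos
  have hrk : r * t = k := by
    rw [ht]
    exact Nat.mul_div_cancel' (hr ▸ hUk ▸ hfriend.dvd_finrank)
  have hlt : ∀ W ∈ orb F K U, W ≠ U → Module.finrank F ↥(U ⊓ W) < k := fun W hW hne =>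
    hUk ▸ finrank_inf_lt (finrank_of_mem_orb hW) hne
  have hdvd : ∀ W ∈ orb F K U, r * (Module.finrank F ↥(U ⊓ W) / r) =
      Module.finrank F ↥(U ⊓ W) := fun W hW =>
    Nat.mul_div_cancel' (hr ▸ (hfriend.inf (hfriend.of_mem_orb hW)).dvd_finrank)
  set S := {m : ℕ | ∃ W ∈ orb F K U, W ≠ U ∧ m = Module.finrank F ↥(U ⊓ W) / r} with hS
  have hSbdd : BddAbove S := by
    refine ⟨k, ?_⟩
    rintro m ⟨W, hW, hne, rfl⟩
    exact (Nat.div_le_self _ _).trans (hlt W hW hne).le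
  have hSne : S.Nonempty := by
    obtain ⟨W, hW, hne⟩ := exists_mem_orb_ne hU1 hUtop
    exact ⟨_, W, hW, hne, rfl⟩
  obtain ⟨W₀, hW₀, hne₀, hs₀⟩ : s ∈ S := hs ▸ Nat.sSup_mem hSne hSbdd
  have hsr : r * s = Module.finrank F ↥(U ⊓ W₀) := by rw [hs₀, hdvd W₀ hW₀]
  have hst : s < t := by
    refine Nat.lt_of_mul_lt_mul_left (a := r) ?_
    rw [hsr, hrk]
    exact hlt W₀ hW₀ hne₀
  have hd : cdist F (orb F K U) = 2 * k - 2 * (r * s) := by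
    refine IsLeast.csInf_eq ⟨⟨U, self_mem_orb U, W₀, hW₀, hne₀.symm, ?_⟩, ?_⟩
    · rw [sdist, finrank_of_mem_orb hW₀, hUk, hsr, two_mul k]
    · rintro d ⟨V, hV, W, hW, hVW, rfl⟩
      obtain ⟨W', hW', hne', h⟩ := exists_inter_finrank hV hW hVW
      have hle : Module.finrank F ↥(U ⊓ W') / r ≤ s := hs ▸ le_csSup hSbdd ⟨W', hW', hne', rfl⟩
      have hle' := Nat.mul_le_mul_left r hle
      rw [hdvd W' hW'] at hle'
      rw [sdist, finrank_of_mem_orb hV, finrank_of_mem_orb hW, hUk, h]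
      omega
  -- With `t = s + e + 1`, all four claims are linear in `r * s`, `r * e` and `r`.
  obtain ⟨e, rfl⟩ := Nat.exists_eq_add_of_lt hst
  have h1 : r * (s + e + 1) = r * s + r * e + r := by ring
  have h2 : 2 * r * (s + e + 1 - s) = 2 * (r * e) + 2 * r := by
    rw [show s + e + 1 - s = e + 1 by omega]
    ring
  rw [hd, h2, mul_comm s r, ← hrk, h1]
  omega
end
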